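/- Let Q₁ = [−1,1]² (the 2×2 square centred at the origin) and Q₂ = [−5,5] × [−3,7] (the 10×10 square centred at (0,2)). Let a, b, c be positive reals with c > 10b, 10b > 59a/3, and 59a/3 > 354/3 (i.e. c > 10b > 59a/3 > 118). Let V : ℝ² → [0,∞) be any function such that: V(x) = c for x ∈ ∂Q₂; V(x) = b for x on the y-axis {x : x₁ = 0} with x ∉ ∂Q₂; V(x) = a for x ∈ ∂Q₁ with x₁ ≠ 0 (and x ∉ ∂Q₂); and 0 ≤ V(x) ≤ 1 for all other x ∈ Q₂. Let x be a point of the open square (−1,1)², let y ∈ ∂Q₂, let T ≥ 0, and let ξ be a V-path on [0,T] from x to y with ξ(t) ∈ Q₂ for all t ∈ [0,T], which is of minimal duration: every V-path from x to y remaining in Q₂ has duration at least T. Then both (0,−1) and (0,−3) lie in the range of ξ. -/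

import Mathlib

/-!
A minimising path `ξ` leaves the small square for the last time at time `s`, at a point `p` of its
boundary, and afterwards meets the boundary of the big square for the first time at time `r`, at a
point `q`. Replacing the portion between `s` and `r` by a path along the fast lines
`p → (0,-1) → (0,-3) → q` gives a competitor, so `r - s` is at most the duration of this detour
(`FastLines.reach_A`, `FastLines.reach_axis`, `FastLines.reach_of_B`), namely at most
`3/a + 2/b + 20/c < 1`.

Between `s` and `r` the speed is `b` on the `y`-axis and at most `1` elsewhere. Since the first
coordinate has zero derivative at almost every time spent on the axis, it moves at speed at most
one, and more generally `l x₀ + m x₁` grows at most at unit rate if `|l| + |m| ≤ 1` and `|m| b ≤ 1`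
(`linear_growth_le`). As `r - s < 1`, the path must meet the axis and stay within distance one of
it, so it runs either from the top side of the small square up to the top side of the big one, or
from bottom side to bottom side. Taking `l = ±(1 - 1/b)` before and after a visit to the axis and
`m = ±1/b`, one gets `r - s ≥ (1 - 1/b)(|p₀| + |q₀|) + h/b` with `h = 6` or `h = 2`.

* At the top the detour costs at most `|p₀|/a + 2/b + 2/b + 20/c`, which is smaller because
  `20/c < 2/b` and `1/a + 1/b ≤ 1`.
* At the bottom it costs at most `|p₀|/a + 2/b + |q₀|/c`, which is smaller unless `p₀ = q₀ = 0`,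
  that is, unless `p = (0,-1)` and `q = (0,-3)`.

This comparison is `crossing_endpoints`.
-/

open MeasureTheory Set
open scoped ENNReal NNReal

/-- A `V`-path on `[0,T]`: a Lipschitz function `ξ : [0,T] → ℝ²` such that for
Lebesgue-almost every `t ∈ [0,T]`, `ξ` is differentiable at `t` (within `[0,T]`)
with `|ξ'(t)| ≤ V(ξ(t))`. -/
def IsVPath (V : EuclideanSpace ℝ (Fin 2) → ℝ) (T : ℝ)
    (ξ : ℝ → EuclideanSpace ℝ (Fin 2)) : Prop :=
  (∃ L : ℝ≥0, LipschitzOnWith L ξ (Set.Icc 0 T)) ∧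
    ∀ᵐ t ∂(volume.restrict (Set.Icc 0 T)),
      DifferentiableWithinAt ℝ ξ (Set.Icc 0 T) t ∧
        ‖derivWithin ξ (Set.Icc 0 T) t‖ ≤ V (ξ t)

/-- The `2×2` square `[−1,1]²` centred at the origin. -/
def sq₁ : Set (EuclideanSpace ℝ (Fin 2)) :=
  {x | x 0 ∈ Set.Icc (-1 : ℝ) 1 ∧ x 1 ∈ Set.Icc (-1 : ℝ) 1}

/-- The `10×10` square `[−5,5] × [−3,7]` centred at `(0,2)`. -/
def sq₂ : Set (EuclideanSpace ℝ (Fin 2)) :=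
  {x | x 0 ∈ Set.Icc (-5 : ℝ) 5 ∧ x 1 ∈ Set.Icc (-3 : ℝ) 7}

/-! ### Derivatives of Lipschitz paths -/

/-- At almost every zero of a real function where it is differentiable, the derivative vanishes:
the zeros with nonzero derivative are isolated, hence countable in number. -/
lemma ae_deriv_eq_zero_of_zero (f : ℝ → ℝ) :
    ∀ᵐ t : ℝ, ∀ d, HasDerivAt f d t → f t = 0 → d = 0 := by
  set S : Set ℝ := {t | ∃ d, HasDerivAt f d t ∧ f t = 0 ∧ d ≠ 0} with hS
  have hdisc : DiscreteTopology S := by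
    rw [discreteTopology_subtype_iff]
    rintro t ⟨d, hd, -, hd0⟩
    have h := hd.eventually_ne (c := 0) hd0
    rw [← Filter.empty_mem_iff_bot, Filter.mem_inf_principal]
    filter_upwards [h] with z hz hzS
    obtain ⟨_, _, hz0, _⟩ := hzS
    exact hz hz0
  have hc : S.Countable := (HereditarilyLindelofSpace.isLindelof S).countable hdisc
  filter_upwards [hc.ae_notMem volume] with t ht d hd h0
  by_contra hne
  exact ht ⟨d, hd, h0, hne⟩

/-- A Lipschitz function whose derivative is almost everywhere at most `1` grows at most at
unit rate. -/
lemma sub_le_of_ae_deriv_le_one {F : ℝ → ℝ} {α β : ℝ} (hαβ : α ≤ β) {K : ℝ≥0}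
    (hF : LipschitzOnWith K F (Icc α β))
    (hd : ∀ᵐ t : ℝ, t ∈ Ioo α β → ∃ d, HasDerivAt F d t ∧ d ≤ 1) :
    F β - F α ≤ β - α := by
  have hac : AbsolutelyContinuousOnInterval F α β := by
    apply LipschitzOnWith.absolutelyContinuousOnInterval (K := K)
    rwa [uIcc_of_le hαβ]
  rw [← hac.integral_deriv_eq_sub]
  calc ∫ t in α..β, deriv F t ≤ ∫ _ in α..β, (1 : ℝ) := by
        apply intervalIntegral.integral_mono_ae_restrict hαβ hac.intervalIntegrable_deriv
          intervalIntegrable_const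
        rw [← restrict_Ioo_eq_restrict_Icc]
        refine (ae_restrict_iff' measurableSet_Ioo).2 ?_
        filter_upwards [hd] with t ht htI
        obtain ⟨d, h1, h2⟩ := ht htI
        rw [h1.deriv]; exact h2
    _ = β - α := by simp

/-- Restatement of `IsVPath` with two-sided derivatives at the interior times. -/
lemma isVPath_iff (V : EuclideanSpace ℝ (Fin 2) → ℝ) (T : ℝ) (ξ : ℝ → EuclideanSpace ℝ (Fin 2)) :
    IsVPath V T ξ ↔ (∃ L : ℝ≥0, LipschitzOnWith L ξ (Icc 0 T)) ∧
      ∀ᵐ t : ℝ, t ∈ Ioo 0 T → ∃ v, HasDerivAt ξ v t ∧ ‖v‖ ≤ V (ξ t) := by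
  unfold IsVPath
  refine and_congr_right fun _ => ?_
  rw [← restrict_Ioo_eq_restrict_Icc, ae_restrict_iff' measurableSet_Ioo]
  refine Filter.eventually_congr (Filter.Eventually.of_forall fun t => ?_)
  refine forall_congr' fun ht => ?_
  have hn : Icc 0 T ∈ nhds t := Icc_mem_nhds ht.1 ht.2
  rw [derivWithin_of_mem_nhds hn]
  constructor
  · rintro ⟨h1, h2⟩
    exact ⟨_, (h1.differentiableAt hn).hasDerivAt, h2⟩
  · rintro ⟨v, h1, h2⟩
    exact ⟨h1.differentiableAt.differentiableWithinAt, by rw [h1.deriv]; exact h2⟩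

lemma norm_sq_eq (v : EuclideanSpace ℝ (Fin 2)) : ‖v‖ ^ 2 = v 0 ^ 2 + v 1 ^ 2 := by
  rw [EuclideanSpace.norm_sq_eq]; simp [Fin.sum_univ_two]

lemma abs_apply_le_norm (v : EuclideanSpace ℝ (Fin 2)) (i : Fin 2) : |v i| ≤ ‖v‖ := by
  simpa using PiLp.norm_apply_le v i

lemma norm_le_abs_add (v : EuclideanSpace ℝ (Fin 2)) : ‖v‖ ≤ |v 0| + |v 1| := by
  apply le_of_sq_le_sq _ (by positivity)
  rw [norm_sq_eq, add_sq, sq_abs, sq_abs]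
  have := mul_nonneg (abs_nonneg (v 0)) (abs_nonneg (v 1))
  linarith

/-- Lower bound on travel times away from the two squares, by calibration: if the speed is at most
`b` on the `y`-axis and at most `1` off it, the linear form `l x₀ + m x₁` increases at most at unit
rate along the path as soon as `|l| + |m| ≤ 1` and `|m| b ≤ 1`. On the axis the first coordinate
has zero derivative almost everywhere, so only `m` matters there. -/
lemma linear_growth_le {V : EuclideanSpace ℝ (Fin 2) → ℝ} {ξ : ℝ → EuclideanSpace ℝ (Fin 2)}
    {α β b l m : ℝ} (hαβ : α ≤ β) {K : ℝ≥0} (hL : LipschitzOnWith K ξ (Icc α β))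
    (hd : ∀ᵐ t : ℝ, t ∈ Ioo α β → ∃ v, HasDerivAt ξ v t ∧ ‖v‖ ≤ V (ξ t))
    (hb : ∀ t ∈ Ioo α β, ξ t 0 = 0 → V (ξ t) ≤ b)
    (h1 : ∀ t ∈ Ioo α β, ξ t 0 ≠ 0 → V (ξ t) ≤ 1)
    (hlm : |l| + |m| ≤ 1) (hm : |m| * b ≤ 1) :
    l * (ξ β 0 - ξ α 0) + m * (ξ β 1 - ξ α 1) ≤ β - α := by
  let P : EuclideanSpace ℝ (Fin 2) →L[ℝ] ℝ :=
    l • EuclideanSpace.proj 0 + m • EuclideanSpace.proj 1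
  have hP : ∀ z, P z = l * z 0 + m * z 1 := fun z => by simp [P]
  have key := sub_le_of_ae_deriv_le_one (F := fun t => P (ξ t)) hαβ
    (P.lipschitz.comp_lipschitzOnWith hL) ?_
  · simp only [hP] at key; linarith
  filter_upwards [hd, ae_deriv_eq_zero_of_zero (fun t => ξ t 0)] with t ht hz htI
  obtain ⟨v, hv, hvV⟩ := ht htI
  refine ⟨P v, P.hasFDerivAt.comp_hasDerivAt t hv, ?_⟩
  rw [hP]
  have hl0 := abs_nonneg l
  have hm0 := abs_nonneg m
  have h0 := abs_apply_le_norm v 0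
  have h0' := abs_apply_le_norm v 1
  have e1 : m * v 1 ≤ |m| * |v 1| := by rw [← abs_mul]; exact le_abs_self _
  have e0 : l * v 0 ≤ |l| * |v 0| := by rw [← abs_mul]; exact le_abs_self _
  by_cases hax : ξ t 0 = 0
  · have hv0 : v 0 = 0 := hz _
      ((EuclideanSpace.proj (𝕜 := ℝ) (0 : Fin 2)).hasFDerivAt.comp_hasDerivAt t hv) hax
    have := mul_le_mul_of_nonneg_left (h0'.trans (hvV.trans (hb t htI hax))) hm0
    rw [hv0]; linarith
  · have hV := hvV.trans (h1 t htI hax)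
    have := mul_le_mul_of_nonneg_left (h0'.trans hV) hm0
    have := mul_le_mul_of_nonneg_left (h0.trans hV) hl0
    linarith

/-! ### Reachability -/

/-- `Reach V p q S`: some `V`-path of duration `S` goes from `p` to `q` inside the big square. -/
def Reach (V : EuclideanSpace ℝ (Fin 2) → ℝ) (p q : EuclideanSpace ℝ (Fin 2)) (S : ℝ) : Prop :=
  0 ≤ S ∧ ∃ η : ℝ → EuclideanSpace ℝ (Fin 2), IsVPath V S η ∧ η 0 = p ∧ η S = q ∧
    ∀ t ∈ Icc (0 : ℝ) S, η t ∈ sq₂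

lemma ae_comp_sub {P : ℝ → Prop} (h : ∀ᵐ t : ℝ, P t) (s : ℝ) : ∀ᵐ t : ℝ, P (t - s) :=
  (measurePreserving_sub_right volume s).quasiMeasurePreserving.ae h

lemma Reach.trans {V : EuclideanSpace ℝ (Fin 2) → ℝ} {p q r : EuclideanSpace ℝ (Fin 2)} {S R : ℝ}
    (h1 : Reach V p q S) (h2 : Reach V q r R) : Reach V p r (S + R) := by
  obtain ⟨hS, η, hη, hη0, hηS, hηr⟩ := h1
  obtain ⟨hR, θ, hθ, hθ0, hθR, hθr⟩ := h2
  rw [isVPath_iff] at hη hθ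
  obtain ⟨⟨L, hL⟩, hηd⟩ := hη
  obtain ⟨⟨M, hM⟩, hθd⟩ := hθ
  -- Writing the concatenation as a sum makes its Lipschitz property immediate.
  set ζ : ℝ → EuclideanSpace ℝ (Fin 2) := fun t => η (min t S) + (θ (max (t - S) 0) - q) with hζ
  have e1 : ∀ t ≤ S, ζ t = η t := fun t ht => by
    simp [hζ, min_eq_left ht, max_eq_right (sub_nonpos.2 ht), hθ0]
  have e2 : ∀ t, S ≤ t → ζ t = θ (t - S) := fun t ht => by
    simp [hζ, min_eq_right ht, max_eq_left (sub_nonneg.2 ht), hηS]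
  refine ⟨by positivity, ζ, (isVPath_iff _ _ _).2 ⟨⟨L + M, ?_⟩, ?_⟩, ?_, ?_, ?_⟩
  · have a1 : LipschitzOnWith (L * 1) (fun t => η (min t S)) (Icc 0 (S + R)) :=
      hL.comp (LipschitzWith.id.min_const S).lipschitzOnWith
        (fun t ht => ⟨le_min ht.1 hS, min_le_right _ _⟩)
    have a2 : LipschitzOnWith (M * 1) (fun t => θ (max (t - S) 0)) (Icc 0 (S + R)) := by
      refine hM.comp (LipschitzWith.lipschitzOnWith ?_) ?_
      · refine LipschitzWith.max_const ?_ 0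
        exact LipschitzWith.of_dist_le_mul fun x y => by simp
      · exact fun t ht => ⟨le_max_right _ _, max_le (by linarith [ht.2]) hR⟩
    have a3 := a1.add a2
    simp only [mul_one] at a3
    intro x hx y hy
    have := a3 hx hy
    simpa [hζ, ← add_sub_assoc, edist_sub_right] using this
  · have hne : ∀ᵐ t : ℝ, t ≠ S := by
      simpa using (countable_singleton S).ae_notMem volume
    filter_upwards [hηd, ae_comp_sub hθd S, hne] with t ht1 ht2 htS htI
    rcases lt_or_gt_of_ne htS with h | h
    · obtain ⟨v, hv, hvV⟩ := ht1 ⟨htI.1, h⟩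
      refine ⟨v, hv.congr_of_eventuallyEq ?_, by rwa [e1 t h.le]⟩
      filter_upwards [Iio_mem_nhds h] with z hz using e1 z (le_of_lt hz)
    · obtain ⟨v, hv, hvV⟩ := ht2 ⟨by linarith, by linarith [htI.2]⟩
      refine ⟨v, (hv.comp_sub_const t S).congr_of_eventuallyEq ?_, by rwa [e2 t h.le]⟩
      filter_upwards [Ioi_mem_nhds h] with z hz using e2 z (le_of_lt hz)
  · rw [e1 0 hS, hη0]
  · rw [e2 _ (by linarith)]; simpa using hθR
  · intro t ht
    rcases le_total t S with h | h
    · rw [e1 t h]; exact hηr t ⟨ht.1, h⟩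
    · rw [e2 t h]; exact hθr _ ⟨by linarith, by linarith [ht.2]⟩

/-- A portion of a `V`-path, with time shifted to start at `0`, is a `V`-path. -/
lemma reach_restrict {V : EuclideanSpace ℝ (Fin 2) → ℝ} {T : ℝ}
    {ξ : ℝ → EuclideanSpace ℝ (Fin 2)} (hξ : IsVPath V T ξ)
    (hr : ∀ t ∈ Icc (0 : ℝ) T, ξ t ∈ sq₂) {s t : ℝ} (hs : 0 ≤ s) (hst : s ≤ t) (ht : t ≤ T) :
    Reach V (ξ s) (ξ t) (t - s) := by
  rw [isVPath_iff] at hξ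
  obtain ⟨⟨L, hL⟩, hd⟩ := hξ
  refine ⟨by linarith, fun u => ξ (u - -s), (isVPath_iff _ _ _).2 ⟨⟨L * 1, ?_⟩, ?_⟩, ?_, ?_, ?_⟩
  · refine hL.comp (LipschitzWith.lipschitzOnWith ?_) ?_
    · exact LipschitzWith.of_dist_le_mul fun x y => by simp
    · exact fun u hu => ⟨by linarith [hu.1], by linarith [hu.2]⟩
  · filter_upwards [ae_comp_sub hd (-s)] with u hu huI
    obtain ⟨v, hv, hvV⟩ := hu ⟨by linarith [huI.1], by linarith [huI.2]⟩
    exact ⟨v, hv.comp_sub_const u (-s), hvV⟩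
  · simp
  · simp
  · exact fun u hu => hr _ ⟨by linarith [hu.1], by linarith [hu.2]⟩

/-- Travel along a segment on whose bounding box the speed is at least `v`. It is used for
axis-parallel segments, which coincide with their bounding box. -/
lemma reach_segment {V : EuclideanSpace ℝ (Fin 2) → ℝ} {p q : EuclideanSpace ℝ (Fin 2)} {v S : ℝ}
    (hS : 0 ≤ S) (hlen : |q 0 - p 0| + |q 1 - p 1| ≤ v * S)
    (h : ∀ z : EuclideanSpace ℝ (Fin 2), z 0 ∈ uIcc (p 0) (q 0) → z 1 ∈ uIcc (p 1) (q 1) →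
      z ∈ sq₂ ∧ v ≤ V z) : Reach V p q S := by
  have hn : ‖q - p‖ ≤ v * S := (norm_le_abs_add _).trans (by simpa using hlen)
  have hmem : ∀ t ∈ Icc 0 S, p + t • (S⁻¹ • (q - p)) ∈ sq₂ ∧
      v ≤ V (p + t • (S⁻¹ • (q - p))) := by
    intro t ht
    have hθ : t * S⁻¹ ∈ Icc (0 : ℝ) 1 := by
      rw [← div_eq_mul_inv]
      exact ⟨div_nonneg ht.1 hS, div_le_one_of_le₀ ht.2 hS⟩
    have hu : ∀ u w : ℝ, u + t * (S⁻¹ * (w - u)) ∈ uIcc u w := by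
      intro u w
      rw [← segment_eq_uIcc, segment_eq_image']
      exact ⟨t * S⁻¹, hθ, by simp [mul_assoc]⟩
    exact h _ (by simpa using hu (p 0) (q 0)) (by simpa using hu (p 1) (q 1))
  have hw : ∀ t, HasDerivAt (fun t : ℝ => p + t • (S⁻¹ • (q - p))) (S⁻¹ • (q - p)) t := by
    intro t
    simpa using ((hasDerivAt_id t).smul_const (S⁻¹ • (q - p))).const_add p
  refine ⟨hS, fun t => p + t • (S⁻¹ • (q - p)), (isVPath_iff _ _ _).2
    ⟨⟨‖S⁻¹ • (q - p)‖₊, ?_⟩, ?_⟩, by simp, ?_, fun t ht => (hmem t ht).1⟩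
  · refine LipschitzWith.lipschitzOnWith ?_
    refine LipschitzWith.of_dist_le_mul fun x y => ?_
    rw [dist_add_left, dist_eq_norm, ← sub_smul, norm_smul, mul_comm, dist_eq_norm]; rfl
  · refine Filter.Eventually.of_forall fun t ht => ⟨_, hw t, ?_⟩
    have hS' : 0 < S := ht.1.trans ht.2
    refine le_trans ?_ (hmem t ⟨ht.1.le, ht.2.le⟩).2
    rw [norm_smul, Real.norm_of_nonneg (by positivity), inv_mul_le_iff₀ hS']
    linarith
  · rcases hS.eq_or_lt with rfl | hS'
    · have : q - p = 0 := by simpa using hn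
      simp [(sub_eq_zero.1 this)]
    · simp [smul_smul, mul_inv_cancel₀ hS'.ne']

lemma frontier_box (a b c d : ℝ) :
    frontier {x : EuclideanSpace ℝ (Fin 2) | x 0 ∈ Icc a b ∧ x 1 ∈ Icc c d} =
      {x | (x 0 ∈ Icc a b ∧ x 1 ∈ Icc c d) ∧ ¬ (x 0 ∈ Ioo a b ∧ x 1 ∈ Ioo c d)} := by
  have hc : ∀ i : Fin 2, Continuous fun x : EuclideanSpace ℝ (Fin 2) => x i := fun i => by fun_prop
  have hcl : IsClosed {x : EuclideanSpace ℝ (Fin 2) | x 0 ∈ Icc a b ∧ x 1 ∈ Icc c d} :=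
    (isClosed_Icc.preimage (hc 0)).inter (isClosed_Icc.preimage (hc 1))
  have hint : interior {x : EuclideanSpace ℝ (Fin 2) | x 0 ∈ Icc a b ∧ x 1 ∈ Icc c d} =
      {x | x 0 ∈ Ioo a b ∧ x 1 ∈ Ioo c d} := by
    have : {x : EuclideanSpace ℝ (Fin 2) | x 0 ∈ Icc a b ∧ x 1 ∈ Icc c d} =
      (fun x => x 0) ⁻¹' Icc a b ∩ (fun x => x 1) ⁻¹' Icc c d := rfl
    rw [this, interior_inter,
      ← (PiLp.isOpenMap_apply 2 _ 0).preimage_interior_eq_interior_preimage (hc 0),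
      ← (PiLp.isOpenMap_apply 2 _ 1).preimage_interior_eq_interior_preimage (hc 1),
      interior_Icc, interior_Icc]
    rfl
  rw [hcl.frontier_eq, hint]; rfl

/-! ### Travelling along the fast lines -/

lemma mem_frontier_sq₁ {z : EuclideanSpace ℝ (Fin 2)} : z ∈ frontier sq₁ ↔
    z ∈ sq₁ ∧ ¬ (z 0 ∈ Ioo (-1 : ℝ) 1 ∧ z 1 ∈ Ioo (-1 : ℝ) 1) := by
  unfold sq₁; rw [frontier_box]; rfl

lemma mem_frontier_sq₂ {z : EuclideanSpace ℝ (Fin 2)} : z ∈ frontier sq₂ ↔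
    z ∈ sq₂ ∧ ¬ (z 0 ∈ Ioo (-5 : ℝ) 5 ∧ z 1 ∈ Ioo (-3 : ℝ) 7) := by
  unfold sq₂; rw [frontier_box]; rfl

lemma notMem_Ioo_of_eq {u w t : ℝ} (h : t = u ∨ t = w) : t ∉ Ioo u w := by
  rintro ⟨h1, h2⟩; rcases h with h | h <;> linarith

lemma eq_or_eq_of_Icc {u w t : ℝ} (h : t ∈ Icc u w) (h' : t ∉ Ioo u w) : t = u ∨ t = w := by
  by_contra! hne
  exact h' ⟨lt_of_le_of_ne h.1 hne.1.symm, lt_of_le_of_ne h.2 hne.2⟩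

/-- If the speed is at least `v` on the boundary of the box `[l,r] × [d,u]`, two points on the same
side of the box can be joined along that side at speed `v`. -/
lemma reach_side {V : EuclideanSpace ℝ (Fin 2) → ℝ} {v l r d u : ℝ} (hv : 0 < v)
    (h : ∀ z : EuclideanSpace ℝ (Fin 2), z 0 ∈ Icc l r → z 1 ∈ Icc d u →
      ((z 0 = l ∨ z 0 = r) ∨ (z 1 = d ∨ z 1 = u)) → z ∈ sq₂ ∧ v ≤ V z)
    {p q : EuclideanSpace ℝ (Fin 2)}
    (hp0 : p 0 ∈ Icc l r) (hp1 : p 1 ∈ Icc d u) (hq0 : q 0 ∈ Icc l r) (hq1 : q 1 ∈ Icc d u)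
    (hpq : (p 0 = q 0 ∧ (p 0 = l ∨ p 0 = r)) ∨ (p 1 = q 1 ∧ (p 1 = d ∨ p 1 = u))) :
    Reach V p q ((|q 0 - p 0| + |q 1 - p 1|) / v) := by
  refine reach_segment (v := v) (by positivity) (by rw [mul_div_cancel₀ _ hv.ne']) ?_
  intro z hz0 hz1
  refine h z (uIcc_subset_Icc hp0 hq0 hz0) (uIcc_subset_Icc hp1 hq1 hz1) ?_
  rcases hpq with ⟨e, h'⟩ | ⟨e, h'⟩
  · rw [← e, uIcc_self] at hz0
    left; rwa [show z 0 = p 0 from hz0]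
  · rw [← e, uIcc_self] at hz1
    right; rwa [show z 1 = p 1 from hz1]

/-- The fast lines available to comparison paths: speed at least `c` on the boundary of the big
square, at least `b` on the whole `y`-axis, at least `a` on the boundary of the small square. -/
structure FastLines (a b c : ℝ) (V : EuclideanSpace ℝ (Fin 2) → ℝ) : Prop where
  a_pos : 0 < a
  a_le_b : a ≤ b
  b_le_c : b ≤ c
  speed_sq₁ : ∀ z ∈ frontier sq₁, a ≤ V z
  speed_axis : ∀ z : EuclideanSpace ℝ (Fin 2), z 0 = 0 → b ≤ V z
  speed_sq₂ : ∀ z ∈ frontier sq₂, c ≤ V z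

namespace FastLines

variable {a b c : ℝ} {V : EuclideanSpace ℝ (Fin 2) → ℝ}

lemma reach_sq₁ (h : FastLines a b c V) {p q : EuclideanSpace ℝ (Fin 2)}
    (hp0 : p 0 ∈ Icc (-1 : ℝ) 1) (hp1 : p 1 ∈ Icc (-1 : ℝ) 1)
    (hq0 : q 0 ∈ Icc (-1 : ℝ) 1) (hq1 : q 1 ∈ Icc (-1 : ℝ) 1)
    (hpq : (p 0 = q 0 ∧ (p 0 = -1 ∨ p 0 = 1)) ∨ (p 1 = q 1 ∧ (p 1 = -1 ∨ p 1 = 1))) :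
    Reach V p q ((|q 0 - p 0| + |q 1 - p 1|) / a) := by
  refine reach_side h.a_pos (fun z h0 h1 hz => ⟨⟨?_, ?_⟩, h.speed_sq₁ z ?_⟩) hp0 hp1 hq0 hq1 hpq
  · exact ⟨by linarith [h0.1], by linarith [h0.2]⟩
  · exact ⟨by linarith [h1.1], by linarith [h1.2]⟩
  · refine mem_frontier_sq₁.2 ⟨⟨h0, h1⟩, fun hi => ?_⟩
    rcases hz with hz | hz
    exacts [notMem_Ioo_of_eq hz hi.1, notMem_Ioo_of_eq hz hi.2]

lemma reach_sq₂ (h : FastLines a b c V) {p q : EuclideanSpace ℝ (Fin 2)}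
    (hp0 : p 0 ∈ Icc (-5 : ℝ) 5) (hp1 : p 1 ∈ Icc (-3 : ℝ) 7)
    (hq0 : q 0 ∈ Icc (-5 : ℝ) 5) (hq1 : q 1 ∈ Icc (-3 : ℝ) 7)
    (hpq : (p 0 = q 0 ∧ (p 0 = -5 ∨ p 0 = 5)) ∨ (p 1 = q 1 ∧ (p 1 = -3 ∨ p 1 = 7))) :
    Reach V p q ((|q 0 - p 0| + |q 1 - p 1|) / c) := by
  have hc : 0 < c := h.a_pos.trans_le (h.a_le_b.trans h.b_le_c)
  refine reach_side hc (fun z h0 h1 hz => ⟨⟨h0, h1⟩, h.speed_sq₂ z ?_⟩) hp0 hp1 hq0 hq1 hpq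
  refine mem_frontier_sq₂.2 ⟨⟨h0, h1⟩, fun hi => ?_⟩
  rcases hz with hz | hz
  exacts [notMem_Ioo_of_eq hz hi.1, notMem_Ioo_of_eq hz hi.2]

lemma reach_axis (h : FastLines a b c V) {u w : ℝ} (hu : u ∈ Icc (-3 : ℝ) 7)
    (hw : w ∈ Icc (-3 : ℝ) 7) :
    Reach V !₂[0, u] !₂[0, w] (|w - u| / b) := by
  have hb : 0 < b := h.a_pos.trans_le h.a_le_b
  refine reach_segment (v := b) (by positivity) (by simp [mul_div_cancel₀ _ hb.ne']) ?_
  intro z hz0 hz1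
  have h0 : z 0 = 0 := by simpa using hz0
  have h1 : z 1 ∈ Icc (-3 : ℝ) 7 := uIcc_subset_Icc hu hw (by simpa using hz1)
  exact ⟨⟨by rw [h0]; norm_num, h1⟩, h.speed_axis z h0⟩

/-- Fast ways from the boundary of the small square to `(0,-1)`: along the bottom side, down one
of the lateral sides, or from the top side down the `y`-axis. -/
lemma reach_A (h : FastLines a b c V) {p : EuclideanSpace ℝ (Fin 2)} (hp : p ∈ frontier sq₁) :
    ∃ S, Reach V p !₂[0, -1] S ∧ S ≤ 3 / a ∧ (p 1 = -1 → S ≤ |p 0| / a) ∧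
      (p 1 = 1 → S ≤ |p 0| / a + 2 / b) := by
  have ha := h.a_pos
  have hb : 0 < b := ha.trans_le h.a_le_b
  obtain ⟨⟨hp0, hp1⟩, hpn⟩ := mem_frontier_sq₁.1 hp
  have habs : |p 0| ≤ 1 := abs_le.2 hp0
  have h2b : 2 / b ≤ 2 / a := by gcongr; exact h.a_le_b
  by_cases hm : p 1 = -1
  · refine ⟨|p 0| / a, ?_, by gcongr; linarith, fun _ => le_rfl, fun e => by linarith⟩
    have := h.reach_sq₁ (q := !₂[0, -1]) hp0 hp1 (by simp) (by simp) (Or.inr (by simp [hm]))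
    simpa [hm] using this
  by_cases ht : p 1 = 1
  · have r1 := h.reach_sq₁ (q := !₂[0, 1]) hp0 hp1 (by simp) (by simp) (Or.inr (by simp [ht]))
    have r2 := h.reach_axis (u := 1) (w := -1) (by norm_num) (by norm_num)
    refine ⟨|p 0| / a + 2 / b, ?_, ?_, fun e => absurd e hm, fun _ => le_rfl⟩
    · have := r1.trans r2
      rw [show |(-1 : ℝ) - 1| = 2 by norm_num] at this
      simpa [ht] using this
    · calc |p 0| / a + 2 / b ≤ 1 / a + 2 / a := by gcongr
        _ = 3 / a := by ring
  · have hs : p 0 = -1 ∨ p 0 = 1 := by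
      refine eq_or_eq_of_Icc hp0 fun h0 => hpn ⟨h0, ?_⟩
      by_contra h1
      rcases eq_or_eq_of_Icc hp1 h1 with e | e
      exacts [hm e, ht e]
    have r1 := h.reach_sq₁ (q := !₂[p 0, -1]) hp0 hp1 hp0 (by simp) (Or.inl (by simp [hs]))
    have r2 := h.reach_sq₁ (p := !₂[p 0, -1]) (q := !₂[0, -1]) hp0 (by simp) (by simp) (by simp)
      (Or.inr (by simp))
    refine ⟨_, r1.trans r2, ?_, fun e => absurd e hm, fun e => absurd e ht⟩
    rw [← add_div]
    gcongr
    have : |-1 - p 1| ≤ 2 := abs_le.2 ⟨by linarith [hp1.2], by linarith [hp1.1]⟩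
    simp
    linarith

/-- Travel from `(0,-3)` to any point of the boundary of the big square, along that boundary. -/
lemma reach_of_B (h : FastLines a b c V) {q : EuclideanSpace ℝ (Fin 2)} (hq : q ∈ frontier sq₂) :
    ∃ S, Reach V !₂[0, -3] q S ∧ S ≤ 20 / c ∧ (q 1 = -3 → S ≤ |q 0| / c) := by
  have hc : 0 < c := h.a_pos.trans_le (h.a_le_b.trans h.b_le_c)
  obtain ⟨⟨hq0, hq1⟩, hqn⟩ := mem_frontier_sq₂.1 hq
  have habs : |q 0| ≤ 5 := abs_le.2 hq0
  by_cases hm : q 1 = -3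
  · refine ⟨|q 0| / c, ?_, by gcongr; linarith, fun _ => le_rfl⟩
    have := h.reach_sq₂ (p := !₂[0, -3]) (by norm_num) (by norm_num) hq0 hq1
      (Or.inr (by simp [hm]))
    simpa [hm] using this
  obtain ⟨e, he, hqe, hee⟩ : ∃ e : ℝ, (e = -5 ∨ e = 5) ∧ |q 0 - e| ≤ 5 ∧ (q 1 = 7 ∨ e = q 0) := by
    by_cases ht : q 1 = 7
    · rcases le_total 0 (q 0) with h0 | h0
      · exact ⟨5, by simp, abs_le.2 ⟨by linarith, by linarith [hq0.2]⟩, Or.inl ht⟩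
      · exact ⟨-5, by simp, abs_le.2 ⟨by linarith [hq0.1], by linarith⟩, Or.inl ht⟩
    · refine ⟨q 0, eq_or_eq_of_Icc hq0 fun h0 => hqn ⟨h0, ?_⟩, by simp, Or.inr rfl⟩
      by_contra h1
      rcases eq_or_eq_of_Icc hq1 h1 with e | e
      exacts [hm e, ht e]
  have he5 : |e| = 5 := by rcases he with rfl | rfl <;> norm_num
  have heI : e ∈ Icc (-5 : ℝ) 5 := abs_le.1 he5.le
  have r1 := h.reach_sq₂ (p := !₂[0, -3]) (q := !₂[e, -3]) (by norm_num) (by norm_num) heI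
    (by norm_num) (Or.inr (by simp))
  have r2 := h.reach_sq₂ (p := !₂[e, -3]) (q := !₂[e, q 1]) heI (by norm_num) heI hq1
    (Or.inl (by simp [he]))
  have r3 := h.reach_sq₂ (p := !₂[e, q 1]) (q := q) heI hq1 hq0 hq1 (by
    rcases hee with h7 | h7
    · exact Or.inr (by simp [h7])
    · exact Or.inl (by rw [← h7]; simp [he]))
  refine ⟨_, (r1.trans r2).trans r3, ?_, fun e => absurd e hm⟩
  rw [← add_div, ← add_div]
  gcongr
  have : |q 1 - -3| ≤ 10 := abs_le.2 ⟨by linarith [hq1.1], by linarith [hq1.2]⟩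
  simp at this ⊢
  linarith

end FastLines

/-! ### The crossing between the two squares -/

/-- A path from the boundary of the small square to the boundary of the big square that stays
strictly between the squares in the meantime, and that is at least as fast as going through
`(0,-1)` and `(0,-3)`, starts at `(0,-1)` and ends at `(0,-3)`. -/
lemma crossing_endpoints {a b c : ℝ} (hcb : 10 * b < c) (hba : 59 * a / 3 < 10 * b) (ha : 6 < a)
    {V : EuclideanSpace ℝ (Fin 2) → ℝ} {ξ : ℝ → EuclideanSpace ℝ (Fin 2)} {α β : ℝ} (hαβ : α < β)
    {K : ℝ≥0} (hL : LipschitzOnWith K ξ (Icc α β))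
    (hd : ∀ᵐ t : ℝ, t ∈ Ioo α β → ∃ v, HasDerivAt ξ v t ∧ ‖v‖ ≤ V (ξ t))
    (hb : ∀ t ∈ Ioo α β, ξ t 0 = 0 → V (ξ t) ≤ b)
    (h1 : ∀ t ∈ Ioo α β, ξ t 0 ≠ 0 → V (ξ t) ≤ 1)
    (hα : ξ α ∈ frontier sq₁) (hβ : ξ β ∈ frontier sq₂) (hout : ∀ t ∈ Ioo α β, ξ t ∉ sq₁)
    {S₁ S₂ : ℝ} (hS₁ : S₁ ≤ 3 / a) (hS₁m : ξ α 1 = -1 → S₁ ≤ |ξ α 0| / a)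
    (hS₁t : ξ α 1 = 1 → S₁ ≤ |ξ α 0| / a + 2 / b)
    (hS₂ : S₂ ≤ 20 / c) (hS₂m : ξ β 1 = -3 → S₂ ≤ |ξ β 0| / c)
    (hfast : β - α ≤ S₁ + 2 / b + S₂) :
    (ξ α 0 = 0 ∧ ξ α 1 = -1) ∧ (ξ β 0 = 0 ∧ ξ β 1 = -3) := by
  have hb11 : 11 < b := by linarith
  have hb0 : 0 < b := by linarith
  have ha0 : 0 < a := by linarith
  have hc0 : 0 < c := by linarith
  have i1 : 1 / a ≤ 1 / 6 := one_div_le_one_div_of_le (by norm_num) ha.le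
  have i2 : 1 / b ≤ 1 / 11 := one_div_le_one_div_of_le (by norm_num) hb11.le
  have i3 : 20 / c < 2 / b := by rw [div_lt_div_iff₀ hc0 hb0]; linarith
  have i4 : 1 / c ≤ 1 / 11 := one_div_le_one_div_of_le (by norm_num) (by linarith)
  have e2 : 2 / b = 2 * (1 / b) := by ring
  have e3 : 3 / a = 3 * (1 / a) := by ring
  have hb1 : 0 < 1 / b := by positivity
  have hD : β - α < 1 := by linarith
  obtain ⟨⟨hα0, hα1⟩, hαn⟩ := mem_frontier_sq₁.1 hα
  obtain ⟨⟨hβ0, hβ1⟩, hβn⟩ := mem_frontier_sq₂.1 hβ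
  have hcont : ContinuousOn ξ (Icc α β) := hL.continuousOn
  have hcont0 : ∀ i : Fin 2, ContinuousOn (fun t => ξ t i) (Icc α β) := fun i =>
    (EuclideanSpace.proj (𝕜 := ℝ) i).continuous.comp_continuousOn hcont
  have grow : ∀ s ∈ Icc α β, ∀ t ∈ Icc α β, s ≤ t → ∀ l m : ℝ, |l| + |m| ≤ 1 → |m| * b ≤ 1 →
      l * (ξ t 0 - ξ s 0) + m * (ξ t 1 - ξ s 1) ≤ t - s := by
    intro s hs t ht hst l m hlm hm
    have hsub : ∀ u ∈ Ioo s t, u ∈ Ioo α β := fun u hu =>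
      ⟨hs.1.trans_lt hu.1, hu.2.trans_le ht.2⟩
    refine linear_growth_le hst (hL.mono (Icc_subset_Icc hs.1 ht.2)) ?_
      (fun u hu => hb u (hsub u hu)) (fun u hu => h1 u (hsub u hu)) hlm hm
    filter_upwards [hd] with u hu huI using hu (hsub u huI)
  have grow0 : ∀ s ∈ Icc α β, ∀ t ∈ Icc α β, s ≤ t → |ξ t 0 - ξ s 0| ≤ t - s := by
    intro s hs t ht hst
    have g1 := grow s hs t ht hst 1 0 (by norm_num) (by norm_num)
    have g2 := grow s hs t ht hst (-1) 0 (by norm_num) (by norm_num)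
    exact abs_le.2 ⟨by linarith, by linarith⟩
  have mα : α ∈ Icc α β := left_mem_Icc.2 hαβ.le
  have mβ : β ∈ Icc α β := right_mem_Icc.2 hαβ.le
  -- Off the axis the speed is at most one, and the two boundaries are at distance two.
  obtain ⟨τ, hτ, hτ0⟩ : ∃ τ ∈ Icc α β, ξ τ 0 = 0 := by
    by_contra! hne
    have hvert : ∀ m : ℝ, |m| ≤ 1 → m * (ξ β 1 - ξ α 1) ≤ β - α := by
      intro m hm
      have := linear_growth_le (l := 0) (m := m) (b := 1) hαβ.le hL hd
        (fun t ht h0 => absurd h0 (hne t ⟨ht.1.le, ht.2.le⟩)) h1 (by simpa using hm)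
        (by simpa using hm)
      linarith
    have g1 := hvert 1 (by norm_num)
    have g2 := hvert (-1) (by norm_num)
    have g3 := abs_le.1 (grow0 α mα β mβ hαβ.le)
    refine hβn ⟨⟨?_, ?_⟩, ?_, ?_⟩ <;> linarith [hα0.1, hα0.2, hα1.1, hα1.2]
  have near : ∀ t ∈ Icc α β, |ξ t 0| < 1 := by
    intro t ht
    rcases le_total t τ with h | h
    · have := grow0 t ht τ hτ h
      rw [hτ0, zero_sub, abs_neg] at this
      linarith [hτ.2, ht.1]
    · have := grow0 τ hτ t ht h
      rw [hτ0, sub_zero] at this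
      linarith [hτ.1, ht.2]
  -- Total time in terms of the horizontal displacements and the total height change.
  have total : ∀ m : ℝ, |m| ≤ 1 / b →
      (1 - 1 / b) * (|ξ α 0| + |ξ β 0|) + m * (ξ β 1 - ξ α 1) ≤ β - α := by
    intro m hm
    have hmb : |m| * b ≤ 1 := by rwa [le_div_iff₀ hb0] at hm
    have hk : ∀ σ : ℝ, |σ| ≤ 1 → |σ * (1 - 1 / b)| + |m| ≤ 1 := by
      intro σ hσ
      rw [abs_mul, abs_of_pos (show (0 : ℝ) < 1 - 1 / b by linarith)]
      have := mul_le_mul_of_nonneg_right hσ (show (0 : ℝ) ≤ 1 - 1 / b by linarith)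
      linarith
    have sgn : ∀ u : ℝ, ∃ σ : ℝ, |σ| ≤ 1 ∧ σ * u = |u| := by
      intro u
      rcases le_total 0 u with h | h
      · exact ⟨1, by norm_num, by rw [abs_of_nonneg h, one_mul]⟩
      · exact ⟨-1, by norm_num, by rw [abs_of_nonpos h]; ring⟩
    obtain ⟨σ, hσ, eσ⟩ := sgn (-ξ α 0)
    obtain ⟨ρ, hρ, eρ⟩ := sgn (ξ β 0)
    have g1 := grow α mα τ hτ hτ.1 _ m (hk σ hσ) hmb
    have g2 := grow τ hτ β mβ hτ.2 _ m (hk ρ hρ) hmb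
    rw [abs_neg] at eσ
    rw [hτ0] at g1 g2
    rw [← eσ, ← eρ]
    linarith
  have nα := near α mα
  have nβ := near β mβ
  have hα1' : ξ α 1 = -1 ∨ ξ α 1 = 1 :=
    eq_or_eq_of_Icc hα1 fun h => hαn ⟨abs_lt.1 nα, h⟩
  have hβ1' : ξ β 1 = -3 ∨ ξ β 1 = 7 :=
    eq_or_eq_of_Icc hβ1 fun h =>
      hβn ⟨⟨by linarith [(abs_lt.1 nβ).1], by linarith [(abs_lt.1 nβ).2]⟩, h⟩
  -- Crossing height zero would mean entering the small square.
  have side : ¬ ∃ t ∈ Ioo α β, ξ t 1 = 0 := by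
    rintro ⟨t, ht, h0⟩
    have := abs_lt.1 (near t ⟨ht.1.le, ht.2.le⟩)
    exact hout t ht ⟨⟨this.1.le, this.2.le⟩, by rw [h0]; norm_num⟩
  have pα := abs_nonneg (ξ α 0)
  have pβ := abs_nonneg (ξ β 0)
  have ea : |ξ α 0| / a = |ξ α 0| * (1 / a) := by ring
  have ec : |ξ β 0| / c = |ξ β 0| * (1 / c) := by ring
  have q1 := mul_le_mul_of_nonneg_left i1 pα
  have q2 := mul_le_mul_of_nonneg_left i2 pα
  have q3 := mul_le_mul_of_nonneg_left i2 pβ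
  have q4 := mul_le_mul_of_nonneg_left i4 pβ
  have tp := total (1 / b) (abs_of_pos hb1).le
  have tm := total (-(1 / b)) (by rw [abs_neg]; exact (abs_of_pos hb1).le)
  rcases hα1' with hA | hA <;> rcases hβ1' with hB | hB
  · have := hS₁m hA
    have := hS₂m hB
    rw [hA, hB] at tm
    have z1 : |ξ α 0| = 0 := by linarith
    have z2 : |ξ β 0| = 0 := by linarith
    exact ⟨⟨abs_eq_zero.1 z1, hA⟩, abs_eq_zero.1 z2, hB⟩
  · refine absurd ?_ side
    exact intermediate_value_Ioo hαβ.le (hcont0 1) (show (0 : ℝ) ∈ _ by rw [hA, hB]; norm_num)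
  · refine absurd ?_ side
    exact intermediate_value_Ioo' hαβ.le (hcont0 1) (show (0 : ℝ) ∈ _ by rw [hA, hB]; norm_num)
  · exfalso
    have := hS₁t hA
    rw [hA, hB] at tp
    linarith

/-! ### Minimising paths -/

/-- Lemma 7.1 of the paper.
In the configuration where the boundary of the `10×10` square has speed `c`, the
`y`-axis has speed `b`, the boundary of the `2×2` square has speed `a` (off the
`y`-axis), all other speeds inside the big square are at most `1`, and
`c > 10b > 59a/3 > 354/3`, every minimum-time `V`-path from an interior point of the
small square to the boundary of the big square, staying inside the big square, must
pass through the points `A = (0,−1)` and `B = (0,−3)`. -/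
theorem stmt_18 (a b c : ℝ)
    (hcb : 10 * b < c) (hba : 59 * a / 3 < 10 * b) (ha : 354 / 3 < 59 * a / 3)
    (V : EuclideanSpace ℝ (Fin 2) → ℝ) (hV0 : ∀ z, 0 ≤ V z)
    (hVc : ∀ z ∈ frontier sq₂, V z = c)
    (hVb : ∀ z : EuclideanSpace ℝ (Fin 2), z 0 = 0 → z ∉ frontier sq₂ → V z = b)
    (hVa : ∀ z ∈ frontier sq₁, z 0 ≠ 0 → z ∉ frontier sq₂ → V z = a)
    (hVother : ∀ z ∈ sq₂, z ∉ frontier sq₂ → z 0 ≠ 0 → z ∉ frontier sq₁ → V z ≤ 1)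
    (x y : EuclideanSpace ℝ (Fin 2))
    (hx : x 0 ∈ Set.Ioo (-1 : ℝ) 1 ∧ x 1 ∈ Set.Ioo (-1 : ℝ) 1)
    (hy : y ∈ frontier sq₂)
    (T : ℝ) (hT : 0 ≤ T) (ξ : ℝ → EuclideanSpace ℝ (Fin 2))
    (hξ : IsVPath V T ξ) (hξ0 : ξ 0 = x) (hξT : ξ T = y)
    (hrange : ∀ t ∈ Set.Icc (0 : ℝ) T, ξ t ∈ sq₂)
    (hmin : ∀ (S : ℝ) (η : ℝ → EuclideanSpace ℝ (Fin 2)), 0 ≤ S →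
      IsVPath V S η → η 0 = x → η S = y →
      (∀ t ∈ Set.Icc (0 : ℝ) S, η t ∈ sq₂) → T ≤ S) :
    (∃ t ∈ Set.Icc (0 : ℝ) T, ξ t 0 = 0 ∧ ξ t 1 = -1) ∧
      (∃ t ∈ Set.Icc (0 : ℝ) T, ξ t 0 = 0 ∧ ξ t 1 = -3) := by
  have ha6 : 6 < a := by linarith
  have hF : FastLines a b c V := by
    have hax : ∀ z : EuclideanSpace ℝ (Fin 2), z 0 = 0 → b ≤ V z := by
      intro z hz
      by_cases hz2 : z ∈ frontier sq₂
      · rw [hVc z hz2]; linarith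
      · rw [hVb z hz hz2]
    refine ⟨by linarith, by linarith, by linarith, fun z hz => ?_, hax, fun z hz => (hVc z hz).ge⟩
    by_cases hz0 : z 0 = 0
    · linarith [hax z hz0]
    by_cases hz2 : z ∈ frontier sq₂
    · rw [hVc z hz2]; linarith
    · rw [hVa z hz hz0 hz2]
  have hmin' : ∀ S, Reach V x y S → T ≤ S := by
    rintro S ⟨hS, η, h1, h2, h3, h4⟩
    exact hmin S η hS h1 h2 h3 h4
  obtain ⟨⟨L, hL⟩, hd⟩ := (isVPath_iff _ _ _).1 hξ
  have hcont : ContinuousOn ξ (Icc 0 T) := hL.continuousOn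
  have hcl : IsClosed sq₁ := by
    have hc : ∀ i : Fin 2, Continuous fun x : EuclideanSpace ℝ (Fin 2) => x i :=
      fun i => by fun_prop
    exact (isClosed_Icc.preimage (hc 0)).inter (isClosed_Icc.preimage (hc 1))
  -- `s` is the last time in the closed small square.
  obtain ⟨s, ⟨hsT, hs1⟩, hsmax⟩ : ∃ s, IsGreatest (Icc 0 T ∩ ξ ⁻¹' sq₁) s := by
    refine IsCompact.exists_isGreatest ?_ ⟨0, left_mem_Icc.2 hT, ?_⟩
    · exact isCompact_Icc.of_isClosed_subset
        (hcont.preimage_isClosed_of_isClosed isClosed_Icc hcl) inter_subset_left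
    · simp only [mem_preimage, hξ0]
      exact ⟨Ioo_subset_Icc_self hx.1, Ioo_subset_Icc_self hx.2⟩
  have hout : ∀ t ∈ Icc 0 T, s < t → ξ t ∉ sq₁ := fun t ht hst h => (hsmax ⟨ht, h⟩).not_gt hst
  have hdisj : ∀ z ∈ sq₁, z ∉ frontier sq₂ := by
    rintro z ⟨⟨h1, h2⟩, h3, h4⟩ hz
    refine (mem_frontier_sq₂.1 hz).2 ⟨⟨?_, ?_⟩, ?_, ?_⟩ <;> linarith
  have hsltT : s < T := by
    refine lt_of_le_of_ne hsT.2 ?_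
    rintro rfl
    exact hdisj _ hs1 (hξT ▸ hy)
  have hsf : ξ s ∈ frontier sq₁ := by
    rw [hcl.frontier_eq]
    refine ⟨hs1, fun hi => ?_⟩
    have h1 : ∀ᶠ t in nhdsWithin s (Ioc s T), ξ t ∈ interior sq₁ :=
      ((hcont s hsT).mono fun t ht => ⟨hsT.1.trans ht.1.le, ht.2⟩).eventually
        (isOpen_interior.mem_nhds hi)
    have : (nhdsWithin s (Ioc s T)).NeBot := by
      rw [nhdsWithin_Ioc_eq_nhdsGT hsltT]; infer_instance
    obtain ⟨t, ht, htI⟩ := (h1.and self_mem_nhdsWithin).exists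
    exact hout t ⟨hsT.1.trans htI.1.le, htI.2⟩ htI.1 (interior_subset ht)
  -- `r` is the first time on the boundary of the big square after `s`.
  obtain ⟨r, ⟨hrI, hr2⟩, hrmin⟩ : ∃ r, IsLeast (Icc s T ∩ ξ ⁻¹' frontier sq₂) r := by
    refine IsCompact.exists_isLeast ?_ ⟨T, right_mem_Icc.2 hsltT.le, ?_⟩
    · exact isCompact_Icc.of_isClosed_subset
        ((hcont.mono (Icc_subset_Icc_left hsT.1)).preimage_isClosed_of_isClosed isClosed_Icc
          isClosed_frontier) inter_subset_left
    · simpa only [mem_preimage, hξT] using hy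
  have hsr : s < r := by
    refine lt_of_le_of_ne hrI.1 ?_
    rintro rfl
    exact hdisj _ hs1 hr2
  have hin : ∀ t ∈ Ioo s r, t ∈ Icc 0 T := fun t ht =>
    ⟨hsT.1.trans ht.1.le, ht.2.le.trans hrI.2⟩
  have hnf : ∀ t ∈ Ioo s r, ξ t ∉ frontier sq₂ := fun t ht h =>
    (hrmin ⟨⟨ht.1.le, ht.2.le.trans hrI.2⟩, h⟩).not_gt ht.2
  obtain ⟨S₁, R₁, hS₁, hS₁m, hS₁t⟩ := hF.reach_A hsf
  obtain ⟨S₂, R₂, hS₂, hS₂m⟩ := hF.reach_of_B hr2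
  have RAB := hF.reach_axis (u := -1) (w := -3) (by norm_num) (by norm_num)
  rw [show |(-3 : ℝ) - -1| = 2 by norm_num] at RAB
  have R0 := reach_restrict hξ hrange le_rfl hsT.1 hsT.2
  have R3 := reach_restrict hξ hrange (hsT.1.trans hrI.1) hrI.2 le_rfl
  rw [hξ0] at R0
  rw [hξT] at R3
  have hfast := hmin' _ ((((R0.trans R₁).trans RAB).trans R₂).trans R3)
  obtain ⟨hA, hB⟩ := crossing_endpoints hcb hba ha6 hsr
    (hL.mono (Icc_subset_Icc hsT.1 hrI.2))
    (by
      filter_upwards [hd] with t ht htI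
      exact ht ⟨hsT.1.trans_lt htI.1, htI.2.trans_le hrI.2⟩)
    (fun t ht h0 => (hVb _ h0 (hnf t ht)).le)
    (fun t ht h0 => hVother _ (hrange t (hin t ht)) (hnf t ht) h0
      fun h => hout t (hin t ht) ht.1 (hcl.frontier_subset h))
    hsf hr2 (fun t ht => hout t (hin t ht) ht.1) hS₁ hS₁m hS₁t hS₂ hS₂m (by linarith)
  exact ⟨⟨s, hsT, hA⟩, r, ⟨hsT.1.trans hrI.1, hrI.2⟩, hB⟩
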